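/- arXiv:2408.13737 — 2 statements merged into one kernel-verified Lean document; each statement's English description precedes it below -/
import Mathlib

section
/- Let q ≥ 2 and let f : ℤ → ℂ be a periodic function with period q. Then L'(0,f) = -log q · ∑_{a=1}^{q} f(a)(1/2 - a/q) + ∑_{a=1}^{q} f(a) · log Γ(a/q) - (1/2) log(2π) · ∑_{a=1}^{q} f(a), where Γ is the Gamma function. -/
open scoped Real

/-- The value at `s = 0` of the derivative of the analytic continuation of
`L(s,f) = ∑_{n ≥ 1} f(n)/n^s`, given via `L(s,f) = q^{-s} ∑_{a=1}^q f(a) ζ(s, a/q)`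
with `ζ` the Hurwitz zeta function. -/
noncomputable def Lderiv0 (q : ℕ) (f : ℤ → ℂ) : ℂ :=
  deriv (fun s : ℂ =>
    (q : ℂ) ^ (-s) *
      ∑ a ∈ Finset.Icc 1 q, f a * HurwitzZeta.hurwitzZeta (((a : ℝ) / q : ℝ) : UnitAddCircle) s) 0

open Filter Topology

lemma aux_mvt {φ φ' φ'' : ℝ → ℂ} {a b B : ℝ} (hb0 : 0 ≤ b) (hb1 : b ≤ 1)
    (h1 : ∀ t, a ≤ t → HasDerivAt φ (φ' t) t) (h2 : ∀ t, a ≤ t → HasDerivAt φ' (φ'' t) t)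
    (hB : ∀ t, a ≤ t → ‖φ'' t‖ ≤ B) :
    ‖φ a - φ (a + b) - (b : ℂ) * (φ (a + b) - φ (a + b + 1))‖ ≤ 2 * B := by
  have hB0 : 0 ≤ B := (norm_nonneg _).trans (hB a le_rfl)
  set c := a + b with hc
  have hd : ∀ t ∈ Set.Icc a (c + 1), ‖φ' t - φ' c‖ ≤ B := by
    intro t ht
    have := Convex.norm_image_sub_le_of_norm_hasDerivWithin_le (s := Set.Ici a) (f := φ') (f' := φ'')
      (C := B) (x := c) (y := t) (fun x hx => (h2 x hx).hasDerivWithinAt) (fun x hx => hB x hx)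
      (convex_Ici a) (by simp [hc, hb0]) ht.1
    refine this.trans ?_
    have h : ‖t - c‖ ≤ 1 := by
      rw [Real.norm_eq_abs, abs_le]; constructor <;> linarith [ht.1, ht.2]
    nlinarith
  have hE : ∀ x ∈ Set.Icc a (c + 1), ∀ y ∈ Set.Icc a (c + 1),
      ‖(φ y - (y : ℂ) * φ' c) - (φ x - (x : ℂ) * φ' c)‖ ≤ B * ‖y - x‖ := by
    intro x hx y hy
    refine Convex.norm_image_sub_le_of_norm_hasDerivWithin_le (s := Set.Icc a (c + 1))
      (f := fun t : ℝ => φ t - (t : ℂ) * φ' c) (f' := fun t => φ' t - φ' c) ?_ hd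
      (convex_Icc _ _) hx hy
    intro t ht
    have h3 : HasDerivAt (fun t : ℝ => (t : ℂ) * φ' c) (1 * φ' c) t :=
      (HasDerivAt.ofReal_comp (hasDerivAt_id t)).mul_const _
    rw [one_mul] at h3
    exact ((h1 t ht.1).fun_sub h3).hasDerivWithinAt
  have e1 := hE c ⟨by linarith, by linarith⟩ a ⟨by linarith, by linarith⟩
  have e2 := hE (c + 1) ⟨by linarith, by linarith⟩ c ⟨by linarith, by linarith⟩
  have n1 : ‖a - c‖ ≤ 1 := by rw [Real.norm_eq_abs, abs_le]; constructor <;> linarith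
  have n2 : ‖c - (c + 1)‖ ≤ 1 := by rw [Real.norm_eq_abs, abs_le]; constructor <;> linarith
  have e1' := e1.trans (mul_le_mul_of_nonneg_left n1 hB0)
  have e2' := e2.trans (mul_le_mul_of_nonneg_left n2 hB0)
  have key : φ a - φ c - (b : ℂ) * (φ c - φ (c + 1)) =
      ((φ a - (a : ℂ) * φ' c) - (φ c - (c : ℂ) * φ' c)) -
      (b : ℂ) * ((φ c - (c : ℂ) * φ' c) - (φ (c + 1) - ((c + 1 : ℝ) : ℂ) * φ' c)) := by
    rw [hc]; push_cast; ring
  rw [key]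
  refine (norm_sub_le _ _).trans ?_
  rw [norm_mul]
  have n3 : ‖(b : ℂ)‖ ≤ 1 := by rw [Complex.norm_real, Real.norm_eq_abs, abs_of_nonneg hb0]; exact hb1
  have := mul_le_mul n3 e2' (norm_nonneg _) zero_le_one
  linarith

lemma aux_deriv {t : ℝ} (ht : 0 < t) (r : ℂ) :
    HasDerivAt (fun y : ℝ => (y : ℂ) ^ r) (r * (t : ℂ) ^ (r - 1)) t := by
  by_cases hr : r = 0
  · subst hr; simpa using hasDerivAt_const t (1 : ℂ)
  · exact hasDerivAt_ofReal_cpow_const ht.ne' hr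

noncomputable def auxH (x : ℝ) (n : ℕ) (s : ℂ) : ℂ :=
  (((n : ℝ) + x : ℝ) : ℂ) ^ (-s) - (((n : ℝ) + 1 : ℝ) : ℂ) ^ (-s) -
    ((1 - x : ℝ) : ℂ) * ((((n : ℝ) + 1 : ℝ) : ℂ) ^ (-s) - (((n : ℝ) + 2 : ℝ) : ℂ) ^ (-s))

def auxU : Set ℂ := {s : ℂ | -(1 / 2) < s.re} ∩ Metric.ball 0 3

lemma auxH_bound {x : ℝ} (hx0 : 0 < x) (hx1 : x ≤ 1) (n : ℕ) (s : ℂ) (hs : s ∈ auxU) :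
    ‖auxH x n s‖ ≤ (2 * (12 * x ^ (-4 : ℝ))) * (1 / |(n : ℝ) + x| ^ (3 / 2 : ℝ)) := by
  obtain ⟨hs1, hs2⟩ := hs
  change -(1 / 2) < s.re at hs1
  have hs3 : ‖s‖ < 3 := by simpa using hs2
  have hn : (0 : ℝ) ≤ n := n.cast_nonneg
  have hre : s.re < 3 := (Complex.re_le_norm s).trans_lt hs3
  have := aux_mvt (φ := fun t : ℝ => (t : ℂ) ^ (-s)) (φ' := fun t : ℝ => (-s) * (t : ℂ) ^ (-s - 1))
    (φ'' := fun t : ℝ => (-s) * ((-s - 1) * (t : ℂ) ^ (-s - 1 - 1))) (a := n + x) (b := 1 - x)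
    (B := (12 * x ^ (-4 : ℝ)) * (1 / |(n : ℝ) + x| ^ (3 / 2 : ℝ)))
    (by linarith) (by linarith) (fun t ht => aux_deriv (by linarith) _)
    (fun t ht => (aux_deriv (by linarith) _).const_mul _) ?_
  · rw [show (n : ℝ) + x + (1 - x) = n + 1 by ring, show (n : ℝ) + 1 + 1 = n + 2 by ring] at this
    simp only [auxH]
    linarith
  · intro t ht
    have ht0 : 0 < t := by linarith
    rw [norm_mul, norm_mul, Complex.norm_cpow_eq_rpow_re_of_pos ht0, norm_neg]
    have h1 : ‖-s - 1‖ ≤ 4 := by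
      refine (norm_sub_le _ _).trans ?_
      rw [norm_neg]; simp; linarith
    have h2 : (-s - 1 - 1).re = -(3 / 2) + -(s.re + 1 / 2) := by simp; ring
    rw [h2, Real.rpow_add ht0]
    have h3 : t ^ (-(3 / 2) : ℝ) ≤ 1 / |(n : ℝ) + x| ^ (3 / 2 : ℝ) := by
      rw [abs_of_pos (by linarith), one_div, ← Real.rpow_neg (by linarith)]
      exact Real.rpow_le_rpow_of_nonpos (by linarith) ht (by norm_num)
    have h4 : t ^ (-(s.re + 1 / 2)) ≤ x ^ (-4 : ℝ) :=
      (Real.rpow_le_rpow_of_nonpos hx0 (by linarith) (by linarith)).trans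
        (Real.rpow_le_rpow_of_exponent_ge hx0 hx1 (by linarith))
    have p1 := Real.rpow_nonneg ht0.le (-(3 / 2) : ℝ)
    have p2 := Real.rpow_nonneg ht0.le (-(s.re + 1 / 2))
    have h5 := mul_le_mul h3 h4 p2 (p1.trans h3)
    have h6 : ‖s‖ * ‖-s - 1‖ ≤ 12 := by
      have := mul_le_mul hs3.le h1 (norm_nonneg _) (by norm_num)
      linarith
    have h7 := mul_le_mul h6 h5 (mul_nonneg p1 p2) (by norm_num)
    linarith

lemma aux_rpos {y : ℝ} (hy : 0 < y) : (y : ℂ) ≠ 0 := by exact_mod_cast hy.ne'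

lemma auxH_hasDeriv {x : ℝ} (hx0 : 0 < x) (n : ℕ) (s : ℂ) : HasDerivAt (auxH x n)
    ((((n : ℝ) + x : ℝ) : ℂ) ^ (-s) * Complex.log ((n : ℝ) + x : ℝ) * (-1)
      - (((n : ℝ) + 1 : ℝ) : ℂ) ^ (-s) * Complex.log ((n : ℝ) + 1 : ℝ) * (-1) -
    ((1 - x : ℝ) : ℂ) * ((((n : ℝ) + 1 : ℝ) : ℂ) ^ (-s) * Complex.log ((n : ℝ) + 1 : ℝ) * (-1)
      - (((n : ℝ) + 2 : ℝ) : ℂ) ^ (-s) * Complex.log ((n : ℝ) + 2 : ℝ) * (-1))) s := by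
  have hn : (0 : ℝ) ≤ n := n.cast_nonneg
  have h : ∀ y : ℝ, 0 < y → HasDerivAt (fun s : ℂ => (y : ℂ) ^ (-s))
      ((y : ℂ) ^ (-s) * Complex.log y * (-1)) s := fun y hy =>
    (hasDerivAt_neg s).const_cpow (Or.inl (aux_rpos hy))
  exact ((h _ (by linarith)).sub (h _ (by linarith))).sub
    (((h _ (by linarith)).sub (h _ (by linarith))).const_mul _)

lemma auxU_open : IsOpen auxU :=
  (isOpen_lt continuous_const Complex.continuous_re).inter Metric.isOpen_ball

lemma auxU_conv : Convex ℝ auxU :=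
  (convex_halfSpace_re_gt _).inter (convex_ball _ _)

lemma aux_summable (x : ℝ) : Summable fun n : ℕ =>
    (2 * (12 * x ^ (-4 : ℝ))) * (1 / |(n : ℝ) + x| ^ (3 / 2 : ℝ)) :=
  ((Real.summable_one_div_nat_add_rpow x _).2 (by norm_num)).mul_left _

lemma aux_series {x : ℝ} (hx0 : 0 < x) (hx1 : x ≤ 1) {s : ℂ} (hs : 1 < s.re) :
    HurwitzZeta.hurwitzZeta (x : UnitAddCircle) s - riemannZeta s
      = ((1 - x : ℝ) : ℂ) + ∑' n, auxH x n s := by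
  have A := HurwitzZeta.hasSum_hurwitzZeta_of_one_lt_re (a := x) ⟨hx0.le, hx1⟩ hs
  have B := HurwitzZeta.hasSum_hurwitzZeta_of_one_lt_re (a := 1) ⟨zero_le_one, le_rfl⟩ hs
  have h1 : (((1 : ℝ) : UnitAddCircle)) = 0 := AddCircle.coe_period 1
  rw [h1, HurwitzZeta.hurwitzZeta_zero] at B
  have C := (hasSum_nat_add_iff' 1).2 B
  have D := (A.sub B).sub ((B.sub C).mul_left ((1 - x : ℝ) : ℂ))
  have E : (fun n => auxH x n s) = (fun n : ℕ => 1 / (n + x : ℂ) ^ s - 1 / (n + (1 : ℝ) : ℂ) ^ s -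
      ((1 - x : ℝ) : ℂ) * (1 / (n + (1 : ℝ) : ℂ) ^ s - 1 / ((n + 1 : ℕ) + (1 : ℝ) : ℂ) ^ s)) := by
    ext n
    simp only [auxH, Complex.cpow_neg, one_div]
    push_cast
    rw [show (n : ℂ) + 1 + 1 = n + 2 by ring]
  rw [E, D.tsum_eq]
  simp

lemma aux_identity {x : ℝ} (hx0 : 0 < x) (hx1 : x ≤ 1) :
    Set.EqOn (fun s => HurwitzZeta.hurwitzZeta (x : UnitAddCircle) s - riemannZeta s)
      (fun s => ((1 - x : ℝ) : ℂ) + ∑' n, auxH x n s) auxU := by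
  have hd := Complex.differentiableOn_tsum_of_summable_norm (aux_summable x)
    (fun n s _ => (auxH_hasDeriv hx0 n s).differentiableAt.differentiableWithinAt) auxU_open
    (fun n s hs => auxH_bound hx0 hx1 n s hs)
  refine AnalyticOnNhd.eqOn_of_preconnected_of_eventuallyEq (𝕜 := ℂ) (z₀ := 2) ?_ ?_
    auxU_conv.isPreconnected ?_ ?_
  · have := HurwitzZeta.differentiable_hurwitzZeta_sub_hurwitzZeta (x : UnitAddCircle) 0
    rw [HurwitzZeta.hurwitzZeta_zero] at this
    exact this.differentiableOn.analyticOnNhd auxU_open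
  · exact (hd.const_add _).analyticOnNhd auxU_open
  · constructor
    · simp; norm_num
    · simp; norm_num
  · have : {s : ℂ | 1 < s.re} ∈ 𝓝 (2 : ℂ) :=
      (isOpen_lt continuous_const Complex.continuous_re).mem_nhds (by simp)
    filter_upwards [this] with s hs
    exact aux_series hx0 hx1 hs

lemma aux_zero_mem : (0 : ℂ) ∈ auxU := by
  constructor
  · simp
  · simp

lemma aux_value {x : ℝ} (hx0 : 0 < x) (hx1 : x ≤ 1) :
    HurwitzZeta.hurwitzZeta (x : UnitAddCircle) 0 = 1 / 2 - x := by
  have h := aux_identity hx0 hx1 aux_zero_mem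
  simp only [riemannZeta_zero] at h
  have h0 : ∀ n, auxH x n 0 = 0 := fun n => by simp [auxH]
  simp only [h0, tsum_zero] at h
  rw [sub_eq_iff_eq_add] at h
  rw [h]; push_cast; ring

lemma aux_partial {x : ℝ} (N : ℕ) :
    ∑ n ∈ Finset.range (N + 1), (-Real.log (n + x) + Real.log (n + 1)
      + (1 - x) * (Real.log (n + 1) - Real.log (n + 2))) =
    Real.BohrMollerup.logGammaSeq x N + (1 - x) * (Real.log N - Real.log (N + 1))
     + (1 - x) * (Real.log (N + 1) - Real.log (N + 2)) + (Real.log (N + 1) - Real.log N) := by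
  have h1 : ∀ M : ℕ, ∑ n ∈ Finset.range M, Real.log ((n : ℝ) + 1) = Real.log (M.factorial) := by
    intro M
    induction M with
    | zero => simp
    | succ k ih =>
      rw [Finset.sum_range_succ, ih, Nat.factorial_succ]
      push_cast
      rw [Real.log_mul (by positivity) (by positivity)]; ring
  have h2 : ∀ M : ℕ, ∑ n ∈ Finset.range M, (Real.log ((n : ℝ) + 1) - Real.log (n + 2)) =
      - Real.log (M + 1) := by
    intro M
    induction M with
    | zero => simp
    | succ k ih =>
      rw [Finset.sum_range_succ, ih]
      push_cast
      rw [show (k : ℝ) + 1 + 1 = k + 2 by ring]; ring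
  rw [Finset.sum_add_distrib, Finset.sum_add_distrib, ← Finset.mul_sum, h1, h2,
    Finset.sum_neg_distrib, Real.BohrMollerup.logGammaSeq, Nat.factorial_succ]
  push_cast
  rw [Real.log_mul (by positivity) (by positivity)]
  rw [show (N : ℝ) + 1 + 1 = N + 2 by ring]
  simp only [add_comm x]
  ring

lemma aux_limit {x : ℝ} (hx0 : 0 < x) :
    Tendsto (fun N : ℕ => ∑ n ∈ Finset.range N, (-Real.log (n + x) + Real.log (n + 1)
      + (1 - x) * (Real.log (n + 1) - Real.log (n + 2)))) atTop (𝓝 (Real.log (Real.Gamma x))) := by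
  rw [← tendsto_add_atTop_iff_nat 1]
  simp only [aux_partial]
  have h1 := Real.BohrMollerup.tendsto_log_gamma hx0
  have h2 := Real.tendsto_log_nat_add_one_sub_log
  have h3 := (tendsto_add_atTop_iff_nat 1).2 h2
  have h4 := ((h1.sub (h2.const_mul (1 - x))).sub (h3.const_mul (1 - x))).add h2
  simp only [mul_zero, sub_zero, add_zero] at h4
  refine h4.congr fun N => ?_
  push_cast
  rw [show (N : ℝ) + 1 + 1 = N + 2 by ring]
  ring

lemma aux_hasDeriv {x : ℝ} (hx0 : 0 < x) (hx1 : x ≤ 1) :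
    HasDerivAt (HurwitzZeta.hurwitzZeta (x : UnitAddCircle))
      (Real.log (Real.Gamma x) - 1 / 2 * Real.log (2 * Real.pi) : ℂ) 0 := by
  have hd := Complex.differentiableOn_tsum_of_summable_norm (aux_summable x)
    (fun n s _ => (auxH_hasDeriv hx0 n s).differentiableAt.differentiableWithinAt) auxU_open
    (fun n s hs => auxH_bound hx0 hx1 n s hs)
  have hs := Complex.hasSum_deriv_of_summable_norm (aux_summable x)
    (fun n s _ => (auxH_hasDeriv hx0 n s).differentiableAt.differentiableWithinAt) auxU_open
    (fun n s hs => auxH_bound hx0 hx1 n s hs) aux_zero_mem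
  have hU : auxU ∈ 𝓝 (0 : ℂ) := auxU_open.mem_nhds aux_zero_mem
  have e : ∀ n : ℕ, deriv (auxH x n) 0 = ((-Real.log (n + x) + Real.log (n + 1)
      + (1 - x) * (Real.log (n + 1) - Real.log (n + 2)) : ℝ) : ℂ) := by
    intro n
    have hn : (0 : ℝ) ≤ n := n.cast_nonneg
    rw [(auxH_hasDeriv hx0 n 0).deriv]
    rw [← Complex.ofReal_log (by linarith), ← Complex.ofReal_log (by linarith),
      ← Complex.ofReal_log (by linarith)]
    simp only [neg_zero, Complex.cpow_zero]
    push_cast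
    ring
  have hl : deriv (fun w => ∑' n, auxH x n w) 0 = (Real.log (Real.Gamma x) : ℂ) := by
    refine tendsto_nhds_unique hs.tendsto_sum_nat ?_
    simp only [e]
    have := (Complex.continuous_ofReal.tendsto _).comp (aux_limit hx0)
    refine this.congr fun N => ?_
    simp only [Function.comp, Complex.ofReal_sum]
  have h1 : HasDerivAt (fun w => ∑' n, auxH x n w) (Real.log (Real.Gamma x) : ℂ) 0 := by
    rw [← hl]
    exact (hd.differentiableAt hU).hasDerivAt
  have h2 := (differentiableAt_riemannZeta (s := 0) zero_ne_one).hasDerivAt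
  rw [deriv_riemannZeta_zero] at h2
  have h3 := (h1.const_add ((1 - x : ℝ) : ℂ)).add h2
  refine (h3.congr_of_eventuallyEq ?_).congr_deriv ?_
  · filter_upwards [hU] with s hs
    have := aux_identity hx0 hx1 hs
    simp only [Pi.add_apply] at this ⊢
    rw [← this]; ring
  · rw [Complex.ofReal_log (x := 2 * π) (by positivity)]
    push_cast
    ring

/-- For a periodic function `f` with period `q ≥ 2`,
`L'(0,f) = -log q ∑_{a=1}^q f(a)(1/2 - a/q) + ∑_{a=1}^q f(a) log Γ(a/q)
  - (1/2) log(2π) ∑_{a=1}^q f(a)`. -/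
theorem stmt16 (q : ℕ) (hq : 2 ≤ q) (f : ℤ → ℂ)
    (hper : ∀ n : ℤ, f (n + q) = f n) :
    Lderiv0 q f =
      -(Real.log q : ℂ) * ∑ a ∈ Finset.Icc 1 q, f a * (1 / 2 - (a : ℂ) / q) +
        (∑ a ∈ Finset.Icc 1 q, f a * (Real.log (Real.Gamma ((a : ℝ) / q)) : ℂ)) -
        (1 / 2) * (Real.log (2 * π) : ℂ) * ∑ a ∈ Finset.Icc 1 q, f a := by
  have hq0 : (0 : ℝ) < q := by exact_mod_cast (by omega : 0 < q)
  have hx : ∀ a ∈ Finset.Icc 1 q, 0 < (a : ℝ) / q ∧ (a : ℝ) / q ≤ 1 := by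
    intro a ha
    rw [Finset.mem_Icc] at ha
    have h1 : (1 : ℝ) ≤ a := by exact_mod_cast ha.1
    have h2 : (a : ℝ) ≤ q := by exact_mod_cast ha.2
    exact ⟨by positivity, (div_le_one hq0).2 h2⟩
  have hqc : (q : ℂ) ≠ 0 := by exact_mod_cast (by omega : q ≠ 0)
  have h1 : HasDerivAt (fun s : ℂ => (q : ℂ) ^ (-s))
      ((q : ℂ) ^ (-(0 : ℂ)) * Complex.log q * (-1)) 0 :=
    (hasDerivAt_neg (0 : ℂ)).const_cpow (Or.inl hqc)
  have h2 := HasDerivAt.fun_sum (u := Finset.Icc 1 q) (fun a ha =>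
    (aux_hasDeriv (hx a ha).1 (hx a ha).2).const_mul (f a))
  unfold Lderiv0
  rw [(h1.fun_mul h2).deriv]
  have h3 : ∑ a ∈ Finset.Icc 1 q, f a *
      HurwitzZeta.hurwitzZeta (((a : ℝ) / q : ℝ) : UnitAddCircle) 0 =
      ∑ a ∈ Finset.Icc 1 q, f a * (1 / 2 - (a : ℂ) / q) := by
    refine Finset.sum_congr rfl fun a ha => ?_
    rw [aux_value (hx a ha).1 (hx a ha).2]; push_cast; rfl
  rw [h3]
  simp only [neg_zero, Complex.cpow_zero, mul_sub (f _) (Real.log _ : ℂ), Finset.sum_sub_distrib,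
    ← Finset.sum_mul]
  rw [Complex.natCast_log]
  ring
end

section
/- Let q ≥ 1 and let f : ℤ → ℂ be a periodic function with period q satisfying ∑_{a=1}^{q} f(a) = 0. Then the Dirichlet series L(s,f) = ∑_{n≥1} f(n)/n^s converges at s = 1 and L(1,f) = ∑_{a=1}^{q} f(a) γ(a,q), where γ(a,q) = lim_{x→∞} ( ∑_{0 < n ≤ x, n ≡ a (mod q)} 1/n - (1/q) log x ). -/
/-- For a periodic `f` with period `q` satisfying `∑_{a=1}^q f(a) = 0`, the Dirichlet series
`L(s,f)` converges at `s = 1` (as the limit of its partial sums) with value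
`∑_{a=1}^q f(a) γ(a,q)`, where `γ(a,q)` is the limit of
`∑_{0 < n ≤ x, n ≡ a (mod q)} 1/n - (1/q) log x`. -/
theorem stmt17 (q : ℕ) (hq : 1 ≤ q) (f : ℤ → ℂ)
    (hper : ∀ n : ℤ, f (n + q) = f n)
    (hsum : ∑ a ∈ Finset.Icc 1 q, f a = 0)
    (γ : ℕ → ℝ)
    (hγ : ∀ a ∈ Finset.Icc 1 q,
      Filter.Tendsto
        (fun N : ℕ =>
          (∑ n ∈ Finset.filter (fun n => n % q = a % q) (Finset.Icc 1 N), (1 : ℝ) / n)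
            - Real.log N / q)
        Filter.atTop (nhds (γ a))) :
    Filter.Tendsto (fun N : ℕ => ∑ n ∈ Finset.Icc 1 N, f n / n)
      Filter.atTop (nhds (∑ a ∈ Finset.Icc 1 q, f a * (γ a : ℂ))) := by
  have hmul : ∀ (k : ℕ) (n : ℤ), f (n + q * k) = f n := by
    intro k
    induction k with
    | zero => intro n; simp
    | succ k ih =>
      intro n
      rw [← ih n, ← hper (n + q * k)]
      congr 1
      push_cast
      ring
  have hmod : ∀ n : ℕ, f n = f ((n % q : ℕ) : ℤ) := by
    intro n
    rw [← hmul (n / q) ((n % q : ℕ) : ℤ)]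
    congr 1
    exact_mod_cast (Nat.mod_add_div n q).symm
  have h1 : Filter.Tendsto (fun N : ℕ => ∑ a ∈ Finset.Icc 1 q, f a *
      (((∑ n ∈ Finset.filter (fun n => n % q = a % q) (Finset.Icc 1 N), (1 : ℝ) / n)
            - Real.log N / q : ℝ) : ℂ)) Filter.atTop
      (nhds (∑ a ∈ Finset.Icc 1 q, f a * (γ a : ℂ))) := by
    refine tendsto_finsetSum _ fun a ha => ?_
    exact Filter.Tendsto.const_mul _ ((Complex.continuous_ofReal.tendsto _).comp (hγ a ha))
  refine h1.congr fun N => ?_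
  have h2 : ∀ a : ℕ, f a *
      (((∑ n ∈ Finset.filter (fun n => n % q = a % q) (Finset.Icc 1 N), (1 : ℝ) / n)
            - Real.log N / q : ℝ) : ℂ) =
      (∑ n ∈ Finset.Icc 1 N, if n % q = a % q then f n / n else 0)
        - f a * ((Real.log N / q : ℝ) : ℂ) := by
    intro a
    rw [Complex.ofReal_sub, mul_sub]
    congr 1
    rw [Complex.ofReal_sum, Finset.mul_sum, Finset.sum_filter]
    refine Finset.sum_congr rfl fun n _ => ?_
    split_ifs with h
    · rw [hmod n, h, ← hmod a]
      push_cast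
      ring
    · rfl
  rw [Finset.sum_congr rfl fun a _ => h2 a, Finset.sum_sub_distrib, ← Finset.sum_mul, hsum,
    zero_mul, sub_zero, Finset.sum_comm]
  refine Finset.sum_congr rfl fun n _ => ?_
  have hlt : n % q < q := Nat.mod_lt _ hq
  have huniq : ∀ a ∈ Finset.Icc 1 q, n % q = a % q → a = if n % q = 0 then q else n % q := by
    intro a ha h
    rw [Finset.mem_Icc] at ha
    rcases ha.2.lt_or_eq with h3 | h3
    · rw [Nat.mod_eq_of_lt h3] at h
      rw [if_neg (by omega)]
      exact h.symm
    · rw [h3, Nat.mod_self] at h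
      rw [if_pos h, h3]
  rw [Finset.sum_eq_single (if n % q = 0 then q else n % q)]
  · rw [if_pos]
    split_ifs with h
    · rw [h, Nat.mod_self]
    · rw [Nat.mod_mod]
  · intro b hb hne
    rw [if_neg]
    exact fun h => hne (huniq b hb h)
  · intro h
    exfalso
    apply h
    rw [Finset.mem_Icc]
    split_ifs <;> omega
end
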